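/- Let q be an odd prime power, let d ≥ 7 be odd, and let r ∈ F_q^+ (a nonzero quadratic residue). If 𝓔 ⊆ F_q^d has size at least 313·q^(d/2), then 𝓔 contains a pair of 4-paths with dilation ratio r. -/

import Mathlib

/-!
Write `d = 2k+1`, `r = s²`, and call a vector `v` null if `‖v‖ = 0`. Let `G` be the finite group of
all bijections `σ` of `F_q^d` with `‖σ x - σ y‖ = ‖x - y‖`. If `σ ∈ G` and `x₁, …, x₅` is a path in
`𝓔` with nonzero edge lengths such that every `y_i = s σ(x_i)` lies in `𝓔`, then `x` and `y` are the
required pair. So it suffices to find `σ` for which `A_σ = {x ∈ 𝓔 : σ x ∈ s⁻¹𝓔}` contains such a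
path (`exists_iso_path`).

If `A_σ` contains no such path, then the graph on `A_σ` joining points at nonzero distance has at
most `6|A_σ|` ordered edges (`exists_path`), so `|A_σ|² ≤ 7|A_σ| + m_σ`, where `m_σ` is the number of
ordered pairs of distinct points of `A_σ` at null distance. Suppose this for all `σ` and average over
`G`. Since `G` is transitive on points, `|A_σ|` has mean `μ = |𝓔|²/q^d ≥ 313²`, hence mean square at
least `μ²`. Since `G` is also transitive on ordered pairs of distinct points at null distance
(`null_pair_transitive`, by reflections), the mean of `m_σ` is `S T / P` (`transitive_count`), where
`S`, `T`, `P` count such pairs in `𝓔`, in `s⁻¹𝓔` and in the whole space.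

Fourier analysis on the null cone gives `P = q^d (q^{2k} - 1)` (`null_card`) and
`S, T ≤ |𝓔|²/q + q^k |𝓔|` (`null_pairs`). Odd dimension matters here: summing over the parameter of
the Gaussian sums produces one more Gauss sum of the quadratic character (`null_expansion`), so the
error is `q^k |𝓔|` rather than `q^{d/2} |𝓔|`. Together these bounds make the mean of `m_σ` at most
`3μ²/4`, so `μ² ≤ 7μ + 3μ²/4`, which contradicts `μ ≥ 313²` (`numeric_contradiction`).
-/


/-- `norm2 x = x₁² + ⋯ + x_d²` for `x ∈ F_q^d`. -/
def norm2 {F : Type*} [Field F] {d : ℕ} (x : Fin d → F) : F := ∑ i, x i ^ 2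

/-- `𝓔` contains a pair of `k`-stars with dilation ratio `r`: there are distinct
`x₁, …, x_{k+1} ∈ 𝓔` and distinct `y₁, …, y_{k+1} ∈ 𝓔` with
`‖y_i − y₁‖ = r‖x_i − x₁‖ ≠ 0` for `i = 2, …, k+1`. -/
def ContainsPairOfStars {F : Type*} [Field F] {d : ℕ}
    (𝓔 : Finset (Fin d → F)) (k : ℕ) (r : F) : Prop :=
  ∃ x y : Fin (k + 1) → (Fin d → F),
    Function.Injective x ∧ Function.Injective y ∧
    (∀ i, x i ∈ 𝓔) ∧ (∀ i, y i ∈ 𝓔) ∧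
    ∀ i : Fin (k + 1), i ≠ 0 →
      norm2 (y i - y 0) = r * norm2 (x i - x 0) ∧ r * norm2 (x i - x 0) ≠ 0

/-- `𝓔` contains a pair of `k`-paths with dilation ratio `r`: there are distinct
`x₁, …, x_{k+1} ∈ 𝓔` and distinct `y₁, …, y_{k+1} ∈ 𝓔` with
`‖y_{i+1} − y_i‖ = r‖x_{i+1} − x_i‖ ≠ 0` for `i = 1, …, k`. -/
def ContainsPairOfPaths {F : Type*} [Field F] {d : ℕ}
    (𝓔 : Finset (Fin d → F)) (k : ℕ) (r : F) : Prop :=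
  ∃ x y : Fin (k + 1) → (Fin d → F),
    Function.Injective x ∧ Function.Injective y ∧
    (∀ i, x i ∈ 𝓔) ∧ (∀ i, y i ∈ 𝓔) ∧
    ∀ i : Fin k,
      norm2 (y i.succ - y i.castSucc) = r * norm2 (x i.succ - x i.castSucc) ∧
      r * norm2 (x i.succ - x i.castSucc) ≠ 0


/-! ### Fourier analysis of the null cone -/

section Fourier

lemma char_sum_prod {F ι : Type*} [Field F] (ψ : AddChar F ℂ) (s : Finset ι) (f : ι → F) :
    ψ (∑ i ∈ s, f i) = ∏ i ∈ s, ψ (f i) := by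
  classical
  induction s using Finset.induction_on with
  | empty => simp
  | insert a s ha ih => rw [Finset.sum_insert ha, Finset.prod_insert ha, AddChar.map_add_eq_mul, ih]

variable {F : Type*} [Field F] [Fintype F] [DecidableEq F]

/-- The quadratic character of `F` with values in `ℂ`. -/
noncomputable def etaC (F : Type*) [Field F] [Fintype F] [DecidableEq F] : MulChar F ℂ :=
  (quadraticChar F).ringHomComp (Int.castRingHom ℂ)

lemma etaC_apply (a : F) : etaC F a = ((quadraticChar F a : ℤ) : ℂ) := rfl

lemma etaC_sq {a : F} (ha : a ≠ 0) : etaC F a ^ 2 = 1 := by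
  rw [etaC_apply]; exact_mod_cast quadraticChar_sq_one ha

lemma etaC_norm_le (a : F) : ‖etaC F a‖ ≤ 1 := by
  by_cases ha : a = 0
  · simp [ha, etaC_apply]
  · have := congrArg norm (etaC_sq ha)
    rw [norm_pow, norm_one] at this
    nlinarith [norm_nonneg (etaC F a)]

lemma etaC_ne_one (hF : ringChar F ≠ 2) : etaC F ≠ 1 := by
  intro h
  obtain ⟨a, ha⟩ := quadraticChar_exists_neg_one' hF
  have h1 : etaC F (a : F) = 1 := by rw [h, MulChar.one_apply_coe]
  rw [etaC_apply, ha] at h1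
  norm_num at h1

lemma etaC_sum (hF : ringChar F ≠ 2) : ∑ a, etaC F a = 0 :=
  MulChar.sum_eq_zero_of_ne_one (etaC_ne_one hF)

lemma gauss_norm_sq (hF : ringChar F ≠ 2) {ψ : AddChar F ℂ} (hψ : ψ.IsPrimitive) :
    ‖gaussSum (etaC F) ψ‖ ^ 2 = Fintype.card F := by
  have h := gaussSum_mul_gaussSum_eq_card (etaC_ne_one hF) hψ
  rw [← star_gaussSum_eq] at h
  have h2 : (gaussSum (etaC F) ψ) * star (gaussSum (etaC F) ψ)
      = ((‖gaussSum (etaC F) ψ‖ ^ 2 : ℝ) : ℂ) := by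
    rw [Complex.star_def, Complex.mul_conj, Complex.normSq_eq_norm_sq]
  rw [h2] at h
  exact_mod_cast h

/-- The twisted Gauss sum `∑ η(a) ψ(a b)` equals `η(b) g`, also at `b = 0`. -/
lemma gauss_twist (hF : ringChar F ≠ 2) (ψ : AddChar F ℂ) (b : F) :
    ∑ a, etaC F a * ψ (a * b) = etaC F b * gaussSum (etaC F) ψ := by
  by_cases hb : b = 0
  · subst hb
    simp only [mul_zero, AddChar.map_zero_eq_one, mul_one, etaC_sum hF, MulChar.map_zero, zero_mul]
  · have h := gaussSum_mulShift (etaC F) ψ (Units.mk0 b hb)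
    rw [← h, ← mul_assoc, Units.val_mk0, ← sq, etaC_sq hb, one_mul, gaussSum]
    simp [AddChar.mulShift_apply, mul_comm]

/-- A one-variable quadratic exponential sum is a Gauss sum, because `u` has `1 + η(u)`
square roots. -/
lemma quad_sum (hF : ringChar F ≠ 2) {ψ : AddChar F ℂ} (hψ : ψ.IsPrimitive) {a : F}
    (ha : a ≠ 0) : ∑ x, ψ (a * x ^ 2) = etaC F a * gaussSum (etaC F) ψ := by
  have h1 : ∑ x, ψ (a * x ^ 2) = ∑ u : F, (etaC F u + 1) * ψ (u * a) := by
    rw [← Finset.sum_fiberwise (s := Finset.univ) (g := fun x : F => x ^ 2)]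
    refine Finset.sum_congr rfl fun u _ => ?_
    have hc := quadraticChar_card_sqrts hF u
    have hcc : ((Finset.univ.filter fun x : F => x ^ 2 = u).card : ℂ) = etaC F u + 1 := by
      rw [etaC_apply]
      have : (Finset.univ.filter fun x : F => x ^ 2 = u) = {x : F | x ^ 2 = u}.toFinset := by
        ext; simp
      rw [this]
      exact_mod_cast hc
    rw [← hcc, ← nsmul_eq_mul, ← Finset.sum_const]
    refine Finset.sum_congr rfl fun x hx => ?_
    rw [(Finset.mem_filter.1 hx).2, mul_comm]
  rw [h1]
  simp_rw [add_mul, one_mul, Finset.sum_add_distrib]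
  rw [gauss_twist hF, AddChar.sum_mulShift a hψ, if_neg ha]
  simp

variable {d : ℕ}

/-- Completing the square in each coordinate evaluates the Gaussian sum with a linear phase. -/
lemma quad_sum_vec (hF : ringChar F ≠ 2) {ψ : AddChar F ℂ} (hψ : ψ.IsPrimitive) {a : F}
    (ha : a ≠ 0) (v : Fin d → F) :
    ∑ m : Fin d → F, ψ (a * norm2 m + m ⬝ᵥ v)
      = (etaC F a * gaussSum (etaC F) ψ) ^ d * ψ (-(4 * a)⁻¹ * norm2 v) := by
  have h2 : (2 : F) ≠ 0 := Ring.two_ne_zero hF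
  have h4 : (4 : F) ≠ 0 := by
    have : (4 : F) = 2 * 2 := by norm_num
    rw [this]; exact mul_ne_zero h2 h2
  have h1 : ∀ c : F, ∑ x, ψ (a * x ^ 2 + x * c)
      = (etaC F a * gaussSum (etaC F) ψ) * ψ (-(4 * a)⁻¹ * c ^ 2) := by
    intro c
    rw [← quad_sum hF hψ ha, Finset.sum_mul,
      ← Equiv.sum_comp (Equiv.addRight (c * (2 * a)⁻¹)) (fun x => ψ (a * x ^ 2) * _)]
    refine Finset.sum_congr rfl fun x _ => ?_
    rw [← AddChar.map_add_eq_mul]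
    congr 1
    simp only [Equiv.coe_addRight]
    field_simp
    ring
  calc ∑ m : Fin d → F, ψ (a * norm2 m + m ⬝ᵥ v)
      = ∑ m : Fin d → F, ∏ i, ψ (a * m i ^ 2 + m i * v i) := by
        refine Finset.sum_congr rfl fun m _ => ?_
        rw [norm2, dotProduct, Finset.mul_sum, ← Finset.sum_add_distrib,
          char_sum_prod]
    _ = ∏ i, ∑ x, ψ (a * x ^ 2 + x * v i) := by
        rw [Finset.prod_univ_sum, Fintype.piFinset_univ]
    _ = _ := by
        simp_rw [h1]
        rw [Finset.prod_mul_distrib, Finset.prod_const, Finset.card_univ, Fintype.card_fin,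
          norm2, Finset.mul_sum, char_sum_prod]

/-- Fourier expansion of the indicator function of the null cone in odd dimension. Summing the
Gaussians `ψ(t‖v‖)` over `t` collapses the coefficients to a single Gauss sum, which is where odd
dimension gains a factor `√q`. -/
lemma null_expansion (hF : ringChar F ≠ 2) {ψ : AddChar F ℂ} (hψ : ψ.IsPrimitive)
    (hd : Odd d) (v : Fin d → F) :
    gaussSum (etaC F) ψ ^ d * (Fintype.card F * (if norm2 v = 0 then 1 else 0) - 1)
      = gaussSum (etaC F) ψ * ∑ m : Fin d → F, etaC F (norm2 m) * ψ (m ⬝ᵥ v) := by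
  have h2 : (2 : F) ≠ 0 := Ring.two_ne_zero hF
  have h4 : (4 : F) ≠ 0 := by
    have : (4 : F) = 2 * 2 := by norm_num
    rw [this]; exact mul_ne_zero h2 h2
  set g := gaussSum (etaC F) ψ
  have hR : ∑ a : F, etaC F a * ∑ m : Fin d → F, ψ (a * norm2 m + m ⬝ᵥ v)
      = g * ∑ m : Fin d → F, etaC F (norm2 m) * ψ (m ⬝ᵥ v) := by
    simp_rw [Finset.mul_sum]
    rw [Finset.sum_comm]
    refine Finset.sum_congr rfl fun m _ => ?_
    simp_rw [AddChar.map_add_eq_mul, ← mul_assoc]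
    rw [← Finset.sum_mul, gauss_twist hF, mul_comm g]
  have hinv : Function.Bijective (fun a : F => -(4 * a)⁻¹) := by
    rw [← Finite.injective_iff_bijective]
    intro a b hab
    have := inv_injective (neg_injective hab)
    exact mul_left_cancel₀ h4 this
  have hall : ∑ a : F, ψ (-(4 * a)⁻¹ * norm2 v)
      = Fintype.card F * (if norm2 v = 0 then 1 else 0) := by
    rw [Function.Bijective.sum_comp hinv (fun t => ψ (t * norm2 v)), AddChar.sum_mulShift _ hψ]
    split_ifs <;> simp
  rw [← hR, ← hall, ← Finset.sum_erase_add _ _ (Finset.mem_univ (0 : F)),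
    ← Finset.sum_erase_add (a := (0 : F)) Finset.univ (fun a => etaC F a * _)
      (Finset.mem_univ (0 : F))]
  simp only [mul_zero, inv_zero, neg_zero, zero_mul, AddChar.map_zero_eq_one, add_sub_cancel_right]
  have h0 : etaC F (0 : F) = 0 := by simp [etaC_apply]
  rw [h0, zero_mul, add_zero, Finset.mul_sum]
  refine Finset.sum_congr rfl fun a ha => ?_
  have ha0 : a ≠ 0 := Finset.ne_of_mem_erase ha
  rw [quad_sum_vec hF hψ ha0, mul_pow, ← mul_assoc, ← mul_assoc]
  obtain ⟨k, rfl⟩ := hd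
  have : etaC F a * etaC F a ^ (2 * k + 1) = 1 := by
    rw [← pow_succ', show 2 * k + 1 + 1 = 2 * (k + 1) by ring, pow_mul, etaC_sq ha0, one_pow]
  rw [this, one_mul]

/-- Orthogonality of the characters `v ↦ ψ(m ⬝ v)` of `F^d`. -/
lemma sum_dot {ψ : AddChar F ℂ} (hψ : ψ.IsPrimitive) (m : Fin d → F) :
    ∑ v : Fin d → F, ψ (v ⬝ᵥ m) = if m = 0 then (Fintype.card F : ℂ) ^ d else 0 := by
  calc ∑ v : Fin d → F, ψ (v ⬝ᵥ m)
      = ∑ v : Fin d → F, ∏ i, ψ (v i * m i) := by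
        simp_rw [dotProduct, char_sum_prod]
    _ = ∏ i, ∑ x, ψ (x * m i) := by rw [Finset.prod_univ_sum, Fintype.piFinset_univ]
    _ = _ := by
        simp_rw [AddChar.sum_mulShift _ hψ]
        split_ifs with h
        · subst h; simp
        · obtain ⟨i, hi⟩ := Function.ne_iff.1 h
          exact Finset.prod_eq_zero (Finset.mem_univ i) (by simpa using hi)

/-- The null cone in odd dimension has exactly `q^(d-1)` points. -/
lemma null_card (hF : ringChar F ≠ 2) (hd : Odd d) :
    Fintype.card F * (Finset.univ.filter fun v : Fin d → F => norm2 v = 0).card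
      = Fintype.card F ^ d := by
  obtain ⟨ψ, hψ⟩ : ∃ ψ : AddChar F ℂ, ψ.IsPrimitive :=
    ⟨_, AddChar.FiniteField.primitiveChar_to_Complex_isPrimitive F⟩
  have hg : gaussSum (etaC F) ψ ≠ 0 := by
    intro h
    have := gauss_norm_sq hF hψ
    rw [h, norm_zero, zero_pow two_ne_zero] at this
    exact Fintype.card_ne_zero (Nat.cast_eq_zero.1 this.symm)
  have hsum := Finset.sum_congr (rfl : (Finset.univ : Finset (Fin d → F)) = _)
    fun v _ => null_expansion hF hψ hd v
  rw [← Finset.mul_sum, ← Finset.mul_sum, Finset.sum_comm, Finset.sum_sub_distrib,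
    ← Finset.mul_sum, Finset.sum_boole] at hsum
  have hz : ∑ m : Fin d → F, ∑ v : Fin d → F, etaC F (norm2 m) * ψ (m ⬝ᵥ v) = 0 := by
    refine Finset.sum_eq_zero fun m _ => ?_
    simp_rw [← Finset.mul_sum, dotProduct_comm m, sum_dot hψ]
    split_ifs with h
    · subst h
      have h0 : norm2 (0 : Fin d → F) = 0 := by simp [norm2]
      rw [h0, MulChar.map_zero, zero_mul]
    · simp
  have hfin : gaussSum (etaC F) ψ ^ d * ((Fintype.card F : ℂ) *
      ((Finset.univ.filter fun v : Fin d → F => norm2 v = 0).card : ℂ)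
        - (Fintype.card F : ℂ) ^ d) = 0 := by
    rw [hz] at hsum
    simpa using hsum
  have := sub_eq_zero.1 ((mul_eq_zero.1 hfin).resolve_left (pow_ne_zero _ hg))
  exact_mod_cast this

/-- Plancherel's identity for the indicator function of `E`. -/
lemma plancherel {ψ : AddChar F ℂ} (hψ : ψ.IsPrimitive) (E : Finset (Fin d → F)) :
    ∑ m : Fin d → F, ‖∑ x ∈ E, ψ (m ⬝ᵥ x)‖ ^ 2 = (Fintype.card F : ℝ) ^ d * E.card := by
  have h : ∀ m : Fin d → F, ((‖∑ x ∈ E, ψ (m ⬝ᵥ x)‖ ^ 2 : ℝ) : ℂ)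
      = ∑ x ∈ E, ∑ y ∈ E, ψ (m ⬝ᵥ (x - y)) := by
    intro m
    rw [← Complex.normSq_eq_norm_sq, ← Complex.mul_conj, map_sum, Finset.sum_mul_sum]
    refine Finset.sum_congr rfl fun x _ => Finset.sum_congr rfl fun y _ => ?_
    rw [dotProduct_sub, sub_eq_add_neg, AddChar.map_add_eq_mul, AddChar.map_neg_eq_conj]
  have h3 : ((∑ m : Fin d → F, ‖∑ x ∈ E, ψ (m ⬝ᵥ x)‖ ^ 2 : ℝ) : ℂ)
      = (Fintype.card F : ℂ) ^ d * E.card := by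
    rw [Complex.ofReal_sum, Finset.sum_congr rfl fun m _ => h m, Finset.sum_comm]
    have : ∀ x ∈ E, ∑ m : Fin d → F, ∑ y ∈ E, ψ (m ⬝ᵥ (x - y)) = (Fintype.card F : ℂ) ^ d := by
      intro x hx
      rw [Finset.sum_comm]
      simp_rw [sum_dot hψ, sub_eq_zero]
      simp [hx]
    rw [Finset.sum_congr rfl this]
    simp [mul_comm]
  exact_mod_cast h3

/-- The number of ordered pairs in `E` at null distance is at most `|E|²/q + q^k |E|`, where
`d = 2k+1`. -/
lemma null_pairs (hF : ringChar F ≠ 2) {k : ℕ} (E : Finset (Fin (2 * k + 1) → F)) :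
    (Fintype.card F : ℝ) * ((E ×ˢ E).filter fun p => norm2 (p.1 - p.2) = 0).card
      ≤ (E.card : ℝ) ^ 2 + (Fintype.card F : ℝ) ^ (k + 1) * E.card := by
  obtain ⟨ψ, hψ⟩ : ∃ ψ : AddChar F ℂ, ψ.IsPrimitive :=
    ⟨_, AddChar.FiniteField.primitiveChar_to_Complex_isPrimitive F⟩
  have hnorm := gauss_norm_sq hF hψ
  set g := gaussSum (etaC F) ψ with hgdef
  set q : ℝ := (Fintype.card F : ℝ) with hq
  set N := ((E ×ˢ E).filter fun p => norm2 (p.1 - p.2) = 0).card with hN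
  have hqpos : 0 < q := by rw [hq]; exact_mod_cast Fintype.card_pos
  have hsum := Finset.sum_congr (rfl : E ×ˢ E = _)
    fun p _ => null_expansion hF hψ (d := 2 * k + 1) ⟨k, rfl⟩ (p.1 - p.2)
  rw [← Finset.mul_sum, ← Finset.mul_sum, Finset.sum_comm, Finset.sum_sub_distrib,
    ← Finset.mul_sum, Finset.sum_boole] at hsum
  have h1 : ∀ m : Fin (2 * k + 1) → F,
      ∑ p ∈ E ×ˢ E, etaC F (norm2 m) * ψ (m ⬝ᵥ (p.1 - p.2))
        = etaC F (norm2 m) * ((‖∑ x ∈ E, ψ (m ⬝ᵥ x)‖ ^ 2 : ℝ) : ℂ) := by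
    intro m
    rw [← Finset.mul_sum, ← Complex.normSq_eq_norm_sq, ← Complex.mul_conj, map_sum,
      Finset.sum_mul_sum, Finset.sum_product]
    congr 1
    refine Finset.sum_congr rfl fun x _ => Finset.sum_congr rfl fun y _ => ?_
    rw [dotProduct_sub, sub_eq_add_neg, AddChar.map_add_eq_mul, AddChar.map_neg_eq_conj]
  rw [Finset.sum_congr rfl fun m _ => h1 m] at hsum
  have hlhs : g ^ (2 * k + 1) * (((q * N - (E.card : ℝ) ^ 2 : ℝ)) : ℂ)
      = g * ∑ m : Fin (2 * k + 1) → F,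
        etaC F (norm2 m) * ((‖∑ x ∈ E, ψ (m ⬝ᵥ x)‖ ^ 2 : ℝ) : ℂ) := by
    rw [hgdef, ← hsum]
    simp [hq, hN, Finset.card_product, sq]
  have hn := congrArg norm hlhs
  have hgpos : 0 < ‖g‖ := by
    rcases (norm_nonneg g).lt_or_eq with h | h
    · exact h
    · rw [← h] at hnorm; norm_num at hnorm; exact absurd hnorm (by
        have := hqpos; intro h'; rw [← h'] at this; exact lt_irrefl _ this)
  have hb : ‖∑ m : Fin (2 * k + 1) → F,
        etaC F (norm2 m) * ((‖∑ x ∈ E, ψ (m ⬝ᵥ x)‖ ^ 2 : ℝ) : ℂ)‖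
      ≤ q ^ (2 * k + 1) * E.card := by
    rw [← plancherel hψ E]
    refine (norm_sum_le _ _).trans (Finset.sum_le_sum fun m _ => ?_)
    rw [norm_mul, Complex.norm_real, Real.norm_of_nonneg (by positivity)]
    exact mul_le_of_le_one_left (by positivity) (etaC_norm_le _)
  rw [norm_mul, norm_mul, norm_pow, Complex.norm_real, pow_succ', pow_mul, hnorm, mul_assoc] at hn
  have hn2 := mul_left_cancel₀ hgpos.ne' hn
  rw [← hn2] at hb
  have hb2 : q ^ k * ‖q * N - (E.card : ℝ) ^ 2‖ ≤ q ^ k * (q ^ (k + 1) * E.card) := by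
    refine hb.trans (le_of_eq ?_); ring
  have hb3 := le_of_mul_le_mul_left hb2 (by positivity)
  have := (le_abs_self _).trans (Real.norm_eq_abs (q * N - (E.card : ℝ) ^ 2) ▸ hb3)
  linarith

end Fourier

/-! ### Paths in dense graphs and transitive group actions -/

section Combinatorics

/-- A finite set on which a relation has more than `6|A|` ordered adjacent pairs contains a path
with five distinct vertices: vertices of degree at most three can be removed until the minimum
degree is at least four, and then a path can be extended greedily. -/
lemma exists_path {α : Type*} [DecidableEq α] (R : α → α → Prop) [DecidableRel R]
    (hs : ∀ a b, R a b → R b a) (hi : ∀ a, ¬ R a a) (A : Finset α)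
    (h : 6 * A.card < ((A ×ˢ A).filter fun p => R p.1 p.2).card) :
    ∃ x : Fin 5 → α, Function.Injective x ∧ (∀ i, x i ∈ A) ∧
      ∀ i : Fin 4, R (x i.castSucc) (x i.succ) := by
  induction A using Finset.strongInduction with
  | H A ih =>
    by_cases hdeg : ∀ a ∈ A, 4 ≤ (A.filter fun b => R a b).card
    · have hne : A.Nonempty := by
        rw [Finset.nonempty_iff_ne_empty]
        rintro rfl
        simp at h
      have hext : ∀ a ∈ A, ∀ S : Finset α, S.card ≤ 3 → ∃ b ∈ A, R a b ∧ b ∉ S := by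
        intro a ha S hS
        obtain ⟨b, hb, hbS⟩ := Finset.exists_mem_notMem_of_card_lt_card
          (lt_of_lt_of_le (Nat.lt_succ_of_le hS) (hdeg a ha))
        exact ⟨b, (Finset.mem_filter.1 hb).1, (Finset.mem_filter.1 hb).2, hbS⟩
      obtain ⟨a0, h0⟩ := hne
      obtain ⟨a1, h1, r1, -⟩ := hext a0 h0 ∅ (by simp)
      obtain ⟨a2, h2, r2, n2⟩ := hext a1 h1 {a0} (by simp)
      obtain ⟨a3, h3, r3, n3⟩ := hext a2 h2 {a0, a1} (Finset.card_le_two.trans (by norm_num))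
      obtain ⟨a4, h4, r4, n4⟩ := hext a3 h3 {a0, a1, a2} Finset.card_le_three
      have e1 : a1 ≠ a0 := by rintro rfl; exact hi _ r1
      have e2 : a2 ≠ a1 := by rintro rfl; exact hi _ r2
      have e3 : a3 ≠ a2 := by rintro rfl; exact hi _ r3
      have e4 : a4 ≠ a3 := by rintro rfl; exact hi _ r4
      simp only [Finset.mem_insert, Finset.mem_singleton, not_or] at n2 n3 n4
      refine ⟨![a0, a1, a2, a3, a4], ?_, ?_, ?_⟩
      · intro i j hij
        fin_cases i <;> fin_cases j <;> simp_all
      · intro i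
        fin_cases i <;> simp [*]
      · intro i
        fin_cases i <;> simp [*]
    · push Not at hdeg
      obtain ⟨a, ha, hlt⟩ := hdeg
      have hsub : ((A ×ˢ A).filter fun p => R p.1 p.2) ⊆
          (((A.erase a) ×ˢ (A.erase a)).filter fun p => R p.1 p.2) ∪
          (((A.filter fun b => R a b).image fun b => (a, b)) ∪
            ((A.filter fun b => R a b).image fun b => (b, a))) := by
        rintro ⟨x, y⟩ hxy
        simp only [Finset.mem_filter, Finset.mem_product] at hxy
        simp only [Finset.mem_union, Finset.mem_filter, Finset.mem_product, Finset.mem_erase,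
          Finset.mem_image, Prod.mk.injEq]
        by_cases hx : x = a
        · subst hx
          exact Or.inr (Or.inl ⟨y, ⟨hxy.1.2, hxy.2⟩, rfl, rfl⟩)
        · by_cases hy : y = a
          · subst hy
            exact Or.inr (Or.inr ⟨x, ⟨hxy.1.1, hs _ _ hxy.2⟩, rfl, rfl⟩)
          · exact Or.inl ⟨⟨⟨hx, hxy.1.1⟩, hy, hxy.1.2⟩, hxy.2⟩
      have hc := (Finset.card_le_card hsub).trans ((Finset.card_union_le _ _).trans
        (Nat.add_le_add_left ((Finset.card_union_le _ _).trans
          (Nat.add_le_add Finset.card_image_le Finset.card_image_le)) _))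
      have hA := Finset.card_erase_add_one ha
      obtain ⟨x, hx, hxA, hxR⟩ := ih (A.erase a) (Finset.erase_ssubset ha) (by omega)
      exact ⟨x, hx, fun i => Finset.mem_of_mem_erase (hxA i), hxR⟩

/-- Double counting for a finite group acting transitively on an invariant finite set `P`: a
random group element carries a given point of `P` to a uniformly distributed point of `P`. -/
lemma transitive_count {G X : Type*} [Group G] [Fintype G] [MulAction G X] [DecidableEq X]
    (P : Finset X) (hinv : ∀ g : G, ∀ p ∈ P, g • p ∈ P)
    (htr : ∀ p ∈ P, ∀ p' ∈ P, ∃ g : G, g • p = p')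
    (S T : Finset X) (hS : S ⊆ P) (hT : T ⊆ P) :
    (∑ g : G, (S.filter fun p => g • p ∈ T).card) * P.card
      = Fintype.card G * (S.card * T.card) := by
  have hfix : ∀ p ∈ P, ∀ p' ∈ P, (Finset.univ.filter fun g : G => g • p = p').card * P.card
      = Fintype.card G := by
    intro p hp p' hp'
    have hconst : ∀ p'' ∈ P, (Finset.univ.filter fun g : G => g • p = p'').card
        = (Finset.univ.filter fun g : G => g • p = p').card := by
      intro p'' hp''
      obtain ⟨h, hh⟩ := htr p'' hp'' p' hp'
      refine Finset.card_bij (fun g _ => h * g) ?_ ?_ ?_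
      · intro g hg
        simp only [Finset.mem_filter, Finset.mem_univ, true_and] at hg ⊢
        rw [mul_smul, hg, hh]
      · intro a _ b _ hab
        exact mul_left_cancel hab
      · intro b hb
        simp only [Finset.mem_filter, Finset.mem_univ, true_and] at hb
        refine ⟨h⁻¹ * b, ?_, by simp⟩
        simp [mul_smul, hb, ← hh]
    have := Finset.card_eq_sum_card_fiberwise (s := (Finset.univ : Finset G)) (t := P)
      (f := fun g => g • p) (fun g _ => hinv g p hp)
    rw [Finset.sum_congr rfl hconst, Finset.sum_const, smul_eq_mul, Finset.card_univ] at this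
    rw [this, mul_comm]
  have hexp : ∀ g : G, (S.filter fun p => g • p ∈ T).card
      = ∑ p ∈ S, ∑ p' ∈ T, if g • p = p' then 1 else 0 := by
    intro g
    rw [Finset.card_filter]
    refine Finset.sum_congr rfl fun p _ => ?_
    rw [Finset.sum_ite_eq]
  simp_rw [hexp]
  rw [Finset.sum_comm, Finset.sum_mul]
  have : ∀ p ∈ S, (∑ g : G, ∑ p' ∈ T, if g • p = p' then 1 else 0) * P.card
      = Fintype.card G * T.card := by
    intro p hp
    rw [Finset.sum_comm, Finset.sum_mul]
    simp_rw [← Finset.card_filter]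
    rw [Finset.sum_congr rfl fun p' hp' => hfix p (hS hp) p' (hT hp')]
    simp [mul_comm]
  rw [Finset.sum_congr rfl this]
  simp only [Finset.sum_const, smul_eq_mul]
  ring

end Combinatorics

/-! ### Isometries and transitivity on null pairs -/

section Isometries

variable {F : Type*} [Field F] {d : ℕ}

lemma norm2_eq_dot (x : Fin d → F) : norm2 x = x ⬝ᵥ x := by
  simp [norm2, dotProduct, sq]

lemma norm2_neg (x : Fin d → F) : norm2 (-x) = norm2 x := by simp [norm2]

lemma norm2_sub_comm (x y : Fin d → F) : norm2 (x - y) = norm2 (y - x) := by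
  rw [← norm2_neg, neg_sub]

lemma norm2_smul (s : F) (x : Fin d → F) : norm2 (s • x) = s ^ 2 * norm2 x := by
  simp [norm2, mul_pow, Finset.mul_sum]

/-- The group of all bijections of `F^d` preserving the distance `‖x - y‖`. -/
def isoGroup (F : Type*) [Field F] (d : ℕ) : Subgroup (Equiv.Perm (Fin d → F)) where
  carrier := {σ | ∀ x y, norm2 (σ x - σ y) = norm2 (x - y)}
  mul_mem' := by
    intro a b ha hb x y
    rw [Equiv.Perm.mul_apply, Equiv.Perm.mul_apply, ha, hb]
  one_mem' := by intro x y; rfl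
  inv_mem' := by
    intro a ha x y
    rw [← ha]
    change norm2 (a (a.symm x) - a (a.symm y)) = _
    rw [Equiv.apply_symm_apply, Equiv.apply_symm_apply]

lemma isoGroup_norm2 (σ : isoGroup F d) (x y : Fin d → F) :
    norm2 (σ • x - σ • y) = norm2 (x - y) := σ.2 x y

/-- The reflection in the hyperplane orthogonal to `a`. -/
def reflFun (a x : Fin d → F) : Fin d → F := x - (2 * (x ⬝ᵥ a) / (a ⬝ᵥ a)) • a

lemma reflFun_sub (a x y : Fin d → F) : reflFun a x - reflFun a y = reflFun a (x - y) := by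
  simp only [reflFun, sub_dotProduct, mul_sub, sub_div, sub_smul]
  abel

lemma reflFun_norm2 (a x : Fin d → F) (ha : a ⬝ᵥ a ≠ 0) : norm2 (reflFun a x) = norm2 x := by
  simp only [norm2_eq_dot, reflFun, sub_dotProduct, dotProduct_sub, smul_dotProduct,
    dotProduct_smul, smul_eq_mul, dotProduct_comm a x]
  field_simp
  ring

lemma reflFun_invol (a x : Fin d → F) (ha : a ⬝ᵥ a ≠ 0) : reflFun a (reflFun a x) = x := by
  have h : reflFun a x ⬝ᵥ a = - (x ⬝ᵥ a) := by
    simp only [reflFun, sub_dotProduct, smul_dotProduct, smul_eq_mul]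
    field_simp
    ring
  rw [reflFun, h, reflFun]
  rw [sub_sub, ← add_smul]
  have : (2 * (x ⬝ᵥ a) / (a ⬝ᵥ a) + 2 * -(x ⬝ᵥ a) / (a ⬝ᵥ a)) = 0 := by ring
  rw [this, zero_smul, sub_zero]

/-- The reflection in `a⊥` as an element of the isometry group. -/
def reflIso (a : Fin d → F) (ha : a ⬝ᵥ a ≠ 0) : isoGroup F d :=
  ⟨⟨reflFun a, reflFun a, fun x => reflFun_invol a x ha, fun x => reflFun_invol a x ha⟩,
    fun x y => by
      change norm2 (reflFun a x - reflFun a y) = _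
      rw [reflFun_sub, reflFun_norm2 a _ ha]⟩

lemma reflIso_smul (a : Fin d → F) (ha : a ⬝ᵥ a ≠ 0) (x : Fin d → F) :
    reflIso a ha • x = reflFun a x := rfl

/-- The translation by `c` as an element of the isometry group. -/
def transIso (c : Fin d → F) : isoGroup F d :=
  ⟨Equiv.addRight c, fun x y => by simp⟩

lemma transIso_smul (c x : Fin d → F) : transIso c • x = x + c := rfl

lemma reflIso_zero (a : Fin d → F) (ha : a ⬝ᵥ a ≠ 0) : reflIso a ha • (0 : Fin d → F) = 0 := by
  simp [reflIso_smul, reflFun]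

/-- If two null vectors are not orthogonal, the reflection along their difference carries one to
the other. -/
lemma null_swap {u v : Fin d → F} (h2 : (2 : F) ≠ 0) (hu : u ⬝ᵥ u = 0) (hv : v ⬝ᵥ v = 0)
    (huv : u ⬝ᵥ v ≠ 0) : ∃ σ : isoGroup F d, σ • (0 : Fin d → F) = 0 ∧ σ • u = v := by
  have hn : (u - v) ⬝ᵥ (u - v) = -(2 * (u ⬝ᵥ v)) := by
    rw [sub_dotProduct, dotProduct_sub, dotProduct_sub, hu, hv, dotProduct_comm v u]; ring
  have ha : (u - v) ⬝ᵥ (u - v) ≠ 0 := by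
    rw [hn]; exact neg_ne_zero.2 (mul_ne_zero h2 huv)
  refine ⟨reflIso _ ha, reflIso_zero _ ha, ?_⟩
  rw [reflIso_smul, reflFun, hn, dotProduct_sub, hu]
  have : 2 * (0 - u ⬝ᵥ v) / -(2 * (u ⬝ᵥ v)) = 1 := by field_simp; ring
  rw [this, one_smul, sub_sub_cancel]

lemma exists_dot_ne {u : Fin d → F} (hu : u ≠ 0) : ∃ p : Fin d → F, u ⬝ᵥ p ≠ 0 := by
  by_contra! h
  exact hu (dotProduct_eq_zero u h)

/-- Isometries fixing the origin act transitively on nonzero null vectors: orthogonal null vectors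
`u`, `v` are joined through a null vector orthogonal to neither. -/
lemma null_transitive {u v : Fin d → F} (h2 : (2 : F) ≠ 0) (hu : norm2 u = 0) (hv : norm2 v = 0)
    (hu0 : u ≠ 0) (hv0 : v ≠ 0) :
    ∃ σ : isoGroup F d, σ • (0 : Fin d → F) = 0 ∧ σ • u = v := by
  rw [norm2_eq_dot] at hu hv
  by_cases huv : u ⬝ᵥ v = 0
  · obtain ⟨p, hpu, hpv⟩ : ∃ p : Fin d → F, u ⬝ᵥ p ≠ 0 ∧ v ⬝ᵥ p ≠ 0 := by
      obtain ⟨a, ha⟩ := exists_dot_ne hu0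
      obtain ⟨b, hb⟩ := exists_dot_ne hv0
      by_cases hva : v ⬝ᵥ a = 0
      · by_cases hub : u ⬝ᵥ b = 0
        · exact ⟨a + b, by simpa [dotProduct_add, hub] using ha,
            by simpa [dotProduct_add, hva] using hb⟩
        · exact ⟨b, hub, hb⟩
      · exact ⟨a, ha, hva⟩
    -- `w` is the null vector on the line through `p` in the direction `u`.
    set w : Fin d → F := p + (-(p ⬝ᵥ p) / (2 * (u ⬝ᵥ p))) • u with hw
    have hww : w ⬝ᵥ w = 0 := by
      rw [hw]
      simp only [add_dotProduct, dotProduct_add, smul_dotProduct, dotProduct_smul, smul_eq_mul,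
        hu, dotProduct_comm p u]
      field_simp
      ring
    have huw : u ⬝ᵥ w ≠ 0 := by
      rw [hw, dotProduct_add, dotProduct_smul, hu]; simpa using hpu
    have hwv : w ⬝ᵥ v ≠ 0 := by
      rw [dotProduct_comm, hw, dotProduct_add, dotProduct_smul, dotProduct_comm v u, huv]
      simpa using hpv
    obtain ⟨σ, s0, s1⟩ := null_swap h2 hu hww huw
    obtain ⟨τ, t0, t1⟩ := null_swap h2 hww hv hwv
    exact ⟨τ * σ, by rw [mul_smul, s0, t0], by rw [mul_smul, s1, t1]⟩
  · exact null_swap h2 hu hv huv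

/-- Isometries act transitively on ordered pairs of distinct points at null distance. -/
lemma null_pair_transitive {p p' : (Fin d → F) × (Fin d → F)} (h2 : (2 : F) ≠ 0)
    (hp : p.1 ≠ p.2) (hp' : p'.1 ≠ p'.2) (h : norm2 (p.1 - p.2) = 0)
    (h' : norm2 (p'.1 - p'.2) = 0) : ∃ σ : isoGroup F d, σ • p = p' := by
  obtain ⟨σ, s0, s1⟩ := null_transitive h2 h h' (sub_ne_zero.2 hp) (sub_ne_zero.2 hp')
  refine ⟨transIso p'.2 * σ * transIso (-p.2), Prod.ext ?_ ?_⟩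
  · rw [Prod.smul_fst, mul_smul, mul_smul, transIso_smul, transIso_smul, ← sub_eq_add_neg, s1,
      sub_add_cancel]
  · rw [Prod.smul_snd, mul_smul, mul_smul, transIso_smul, transIso_smul, add_neg_cancel, s0,
      zero_add]

end Isometries

/-! ### Averaging over the isometry group -/

section Averaging

/-- The numerical contradiction. Here `a` and `b` are the sums over the isometry group, of order
`M`, of the numbers of points and of null pairs, `e = |E|`, `D = q^d`, `S` and `T` count the null
pairs of the two sets, `B` bounds both, and `P` is the number of null pairs of `F^d`. -/
lemma numeric_contradiction {q e D P B M a b S T : ℝ} (hq : 3 ≤ q) (hD : 0 < D) (hM : 0 < M)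
    (he : 97969 * D ≤ e ^ 2) (hP : 9 / 10 * D ^ 2 ≤ q * P)
    (hBD : (q * B - e ^ 2) ^ 2 ≤ q * D * e ^ 2)
    (hS : S ≤ B) (hT : T ≤ B) (hS0 : 0 ≤ S) (hT0 : 0 ≤ T)
    (ha : a * D = M * e ^ 2) (hb : b * P = M * (S * T)) (hab : a ^ 2 ≤ M * (7 * a + b)) :
    False := by
  have hq0 : 0 < q := by linarith
  have hP0 : 0 < P := by
    have : 0 < q * P := lt_of_lt_of_le (by positivity) hP
    exact pos_of_mul_pos_right this hq0.le
  obtain ⟨μ, hμ⟩ : ∃ μ, μ = e ^ 2 / D := ⟨_, rfl⟩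
  have heμ : e ^ 2 = μ * D := by rw [hμ]; field_simp
  have hμ1 : 97969 ≤ μ := by rw [hμ, le_div_iff₀ hD]; exact he
  have haM : a = M * μ := by
    have : a * D = (M * μ) * D := by rw [ha, heμ]; ring
    exact mul_right_cancel₀ hD.ne' this
  rw [heμ] at hBD
  -- `(x + y)² ≤ 2x² + 2y²` splits the main term from the error term.
  have hB2 : (q * B) ^ 2 ≤ 2 * (μ * D) ^ 2 + 2 * (q * D * (μ * D)) := by
    nlinarith [sq_nonneg (q * B - 2 * (μ * D))]
  have hST : S * T ≤ B ^ 2 := by rw [sq]; exact mul_le_mul hS hT hT0 (hS0.trans hS)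
  have hk : q ^ 2 * B ^ 2 ≤ q ^ 2 * (3 / 4 * μ ^ 2 * P) := by
    have h1 : q ^ 2 * (3 / 4 * μ ^ 2 * P) ≥ q * (27 / 40 * μ ^ 2 * D ^ 2) := by
      have := mul_le_mul_of_nonneg_left hP (by positivity : 0 ≤ q * (3 / 4 * μ ^ 2))
      nlinarith
    have h2 : 2 * (μ * D) ^ 2 ≤ q * (2 / 3 * (μ ^ 2 * D ^ 2)) := by
      have := mul_le_mul_of_nonneg_right hq (by positivity : 0 ≤ 2 / 3 * (μ ^ 2 * D ^ 2))
      nlinarith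
    have h3 : 2 * (q * D * (μ * D)) ≤ q * (2 / 97969 * (μ ^ 2 * D ^ 2)) := by
      have := mul_le_mul_of_nonneg_right hμ1 (by positivity : 0 ≤ q * (2 / 97969 * (μ * D ^ 2)))
      nlinarith
    have h4 : 0 ≤ q * (μ ^ 2 * D ^ 2) := by positivity
    nlinarith
  have hk2 : B ^ 2 ≤ 3 / 4 * μ ^ 2 * P := le_of_mul_le_mul_left hk (by positivity)
  have hbM : b ≤ M * (3 / 4 * μ ^ 2) := by
    refine le_of_mul_le_mul_right ?_ hP0
    rw [hb, mul_assoc]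
    exact mul_le_mul_of_nonneg_left (hST.trans hk2) hM.le
  rw [haM] at hab
  have h5 : M ^ 2 * μ ^ 2 ≤ M ^ 2 * (7 * μ + 3 / 4 * μ ^ 2) := by
    have := mul_le_mul_of_nonneg_left hbM hM.le
    nlinarith
  have h6 := le_of_mul_le_mul_left h5 (by positivity)
  nlinarith

/-- The ordered pairs of distinct points of `E` at null distance. -/
def nullOff {F : Type*} [Field F] [DecidableEq F] {d : ℕ}
    (E : Finset (Fin d → F)) : Finset ((Fin d → F) × (Fin d → F)) :=
  (E ×ˢ E).filter fun p => p.1 ≠ p.2 ∧ norm2 (p.1 - p.2) = 0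

lemma mem_nullOff {F : Type*} [Field F] [DecidableEq F] {d : ℕ} {E : Finset (Fin d → F)}
    {p : (Fin d → F) × (Fin d → F)} :
    p ∈ nullOff E ↔ (p.1 ∈ E ∧ p.2 ∈ E) ∧ p.1 ≠ p.2 ∧ norm2 (p.1 - p.2) = 0 := by
  simp [nullOff]

variable {F : Type*} [Field F] [Fintype F] [DecidableEq F]

lemma nullOff_univ_card (hF : ringChar F ≠ 2) (k : ℕ) :
    (nullOff (Finset.univ : Finset (Fin (2 * k + 1) → F))).card
      = Fintype.card F ^ (2 * k + 1) * (Fintype.card F ^ (2 * k) - 1) := by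
  have hN := null_card (F := F) hF (d := 2 * k + 1) ⟨k, rfl⟩
  rw [pow_succ', Nat.mul_right_inj Fintype.card_ne_zero] at hN
  have h0 : (0 : Fin (2 * k + 1) → F) ∈ Finset.univ.filter
      fun v : Fin (2 * k + 1) → F => norm2 v = 0 := by
    rw [Finset.mem_filter]
    exact ⟨Finset.mem_univ _, by simp [norm2]⟩
  rw [← hN, ← Finset.card_erase_of_mem h0]
  have hV : Fintype.card F ^ (2 * k + 1)
      = (Finset.univ : Finset (Fin (2 * k + 1) → F)).card := by simp
  rw [hV, ← Finset.card_product]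
  refine Finset.card_bij' (fun p _ => (p.2, p.1 - p.2)) (fun p _ => (p.1 + p.2, p.1)) ?_ ?_ ?_ ?_
  · intro p hp
    rw [mem_nullOff] at hp
    simp [sub_ne_zero, hp.2.1, hp.2.2]
  · intro p hp
    simp only [Finset.mem_product, Finset.mem_univ, true_and, Finset.mem_erase,
      Finset.mem_filter] at hp
    rw [mem_nullOff]
    simp [hp.1, hp.2]
  · intro p _
    simp
  · intro p _
    simp

/-- Some isometry `σ` carries the five points of a path with nonzero edge lengths in `E` into `E'`,
provided `|E| = |E'| ≥ 313 q^{d/2}`. -/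
lemma exists_iso_path (hF : ringChar F ≠ 2) (hq : 3 ≤ Fintype.card F) {k : ℕ} (hk : 3 ≤ k)
    (E E' : Finset (Fin (2 * k + 1) → F)) (hEE : E'.card = E.card)
    (hcard : 97969 * (Fintype.card F : ℝ) ^ (2 * k + 1) ≤ (E.card : ℝ) ^ 2) :
    ∃ σ : isoGroup F (2 * k + 1), ∃ x : Fin 5 → (Fin (2 * k + 1) → F), Function.Injective x ∧
      (∀ i, x i ∈ E ∧ σ • x i ∈ E') ∧
      ∀ i : Fin 4, norm2 (x i.castSucc - x i.succ) ≠ 0 := by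
  classical
  by_contra! hno
  have h2 : (2 : F) ≠ 0 := Ring.two_ne_zero hF
  let G := isoGroup F (2 * k + 1)
  have : Fintype G := Fintype.ofFinite G
  let n : G → ℕ := fun σ => (E.filter fun x => σ • x ∈ E').card
  let m : G → ℕ := fun σ => ((nullOff E).filter fun p => σ • p ∈ nullOff E').card
  have hn : (∑ σ, n σ) * Fintype.card F ^ (2 * k + 1) = Fintype.card G * (E.card * E.card) := by
    have := transitive_count (G := G) (Finset.univ : Finset (Fin (2 * k + 1) → F))
      (fun _ _ _ => Finset.mem_univ _)
      (fun p _ p' _ => ⟨transIso (p' - p), by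
        change transIso (p' - p) • p = p'
        rw [transIso_smul, add_sub_cancel]⟩)
      E E' (Finset.subset_univ _) (Finset.subset_univ _)
    rw [hEE] at this
    simpa using this
  have hsub : ∀ A : Finset (Fin (2 * k + 1) → F), nullOff A ⊆ nullOff Finset.univ := by
    intro A p hp
    rw [mem_nullOff] at hp ⊢
    exact ⟨by simp, hp.2⟩
  have hm := transitive_count (G := G) (nullOff (Finset.univ : Finset (Fin (2 * k + 1) → F)))
    (fun σ p hp => by
      rw [mem_nullOff] at hp ⊢
      refine ⟨by simp, ?_, ?_⟩
      · rw [Prod.smul_fst, Prod.smul_snd]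
        exact fun h => hp.2.1 (smul_left_cancel σ h)
      · rw [Prod.smul_fst, Prod.smul_snd]
        exact (isoGroup_norm2 σ _ _).trans hp.2.2)
    (fun p hp p' hp' => by
      rw [mem_nullOff] at hp hp'
      exact null_pair_transitive h2 hp.2.1 hp'.2.1 hp.2.2 hp'.2.2)
    (nullOff E) (nullOff E') (hsub _) (hsub _)
  rw [nullOff_univ_card hF] at hm
  have hpt : ∀ σ : G, n σ ^ 2 ≤ 7 * n σ + m σ := by
    intro σ
    set A := E.filter fun x => σ • x ∈ E' with hA
    have hle : ((A ×ˢ A).filter fun p => norm2 (p.1 - p.2) ≠ 0).card ≤ 6 * A.card := by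
      by_contra! hlt
      obtain ⟨x, hx, hxA, hxR⟩ := exists_path (fun a b => norm2 (a - b) ≠ 0)
        (fun a b h => by rwa [norm2_sub_comm]) (fun a h => h (by simp [norm2])) A hlt
      obtain ⟨i, hi⟩ := hno σ x hx (fun i => Finset.mem_filter.1 (hxA i))
      exact hxR i hi
    have hnull : ((A ×ˢ A).filter fun p => norm2 (p.1 - p.2) = 0) ⊆
        (A.image fun a => (a, a)) ∪ ((nullOff E).filter fun p => σ • p ∈ nullOff E') := by
      rintro ⟨x, y⟩ hxy
      simp only [Finset.mem_filter, Finset.mem_product, hA] at hxy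
      rw [Finset.mem_union]
      by_cases hxy' : x = y
      · subst hxy'
        exact Or.inl (Finset.mem_image.2 ⟨x, Finset.mem_filter.2 hxy.1.1, rfl⟩)
      · refine Or.inr (Finset.mem_filter.2 ⟨?_, ?_⟩)
        · rw [mem_nullOff]
          exact ⟨⟨hxy.1.1.1, hxy.1.2.1⟩, hxy', hxy.2⟩
        · rw [mem_nullOff]
          exact ⟨⟨hxy.1.1.2, hxy.1.2.2⟩, fun h => hxy' (smul_left_cancel σ h),
            (isoGroup_norm2 σ _ _).trans hxy.2⟩
    have hc := (Finset.card_le_card hnull).trans ((Finset.card_union_le _ _).trans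
      (Nat.add_le_add_right Finset.card_image_le _))
    have htot := Finset.card_filter_add_card_filter_not (s := A ×ˢ A)
      (fun p => norm2 (p.1 - p.2) = 0)
    rw [Finset.card_product] at htot
    change A.card ^ 2 ≤ 7 * A.card + m σ
    change _ ≤ A.card + m σ at hc
    rw [sq]
    simp only [ne_eq] at hle
    omega
  have hcs : ((∑ σ, n σ : ℕ) : ℝ) ^ 2
      ≤ (Fintype.card G : ℝ) * (7 * (∑ σ, n σ : ℕ) + (∑ σ, m σ : ℕ)) := by
    have h1 : (∑ σ, n σ) ^ 2 ≤ Fintype.card G * ∑ σ, n σ ^ 2 := by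
      exact_mod_cast sq_sum_le_card_mul_sum_sq (s := (Finset.univ : Finset G)) (f := n)
    have h3 : ∑ σ, n σ ^ 2 ≤ 7 * ∑ σ, n σ + ∑ σ, m σ := by
      rw [Finset.mul_sum, ← Finset.sum_add_distrib]
      exact Finset.sum_le_sum fun σ _ => hpt σ
    exact_mod_cast h1.trans (Nat.mul_le_mul_left _ h3)
  have hqR : (3 : ℝ) ≤ Fintype.card F := by exact_mod_cast hq
  set q : ℝ := (Fintype.card F : ℝ) with hqdef
  have hqpos : 0 < q := by linarith
  have hcount : ∀ A : Finset (Fin (2 * k + 1) → F), A.card = E.card →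
      ((nullOff A).card : ℝ) ≤ ((E.card : ℝ) ^ 2 + q ^ (k + 1) * E.card) / q := by
    intro A hA
    have h1 : (nullOff A).card ≤ ((A ×ˢ A).filter fun p => norm2 (p.1 - p.2) = 0).card := by
      refine Finset.card_le_card fun p hp => ?_
      rw [mem_nullOff] at hp
      simp [hp.1.1, hp.1.2, hp.2.2]
    have h3 := null_pairs hF A
    rw [hA] at h3
    rw [le_div_iff₀ hqpos, mul_comm]
    refine le_trans ?_ h3
    exact mul_le_mul_of_nonneg_left (by exact_mod_cast h1) hqpos.le
  have hqB : q * (((E.card : ℝ) ^ 2 + q ^ (k + 1) * E.card) / q) - (E.card : ℝ) ^ 2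
      = q ^ (k + 1) * E.card := by
    field_simp
    ring
  have hpow : (10 : ℝ) ≤ q ^ (2 * k) := by
    calc (10 : ℝ) ≤ 3 ^ 6 := by norm_num
      _ ≤ q ^ 6 := by gcongr
      _ ≤ q ^ (2 * k) := pow_le_pow_right₀ (by linarith) (by omega)
  refine numeric_contradiction (q := q) (e := E.card) (D := q ^ (2 * k + 1))
    (P := q ^ (2 * k + 1) * (q ^ (2 * k) - 1))
    (B := ((E.card : ℝ) ^ 2 + q ^ (k + 1) * E.card) / q) (M := Fintype.card G)
    (a := (∑ σ, n σ : ℕ)) (b := (∑ σ, m σ : ℕ)) hqR (by positivity)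
    (by exact_mod_cast Fintype.card_pos) hcard ?_ ?_ (hcount E rfl) (hcount E' hEE)
    (by positivity) (by positivity) ?_ ?_ hcs
  · have h1 : 9 / 10 * (q ^ (2 * k)) ≤ q ^ (2 * k) - 1 := by linarith
    calc 9 / 10 * (q ^ (2 * k + 1)) ^ 2
        = q * q ^ (2 * k + 1) * (9 / 10 * q ^ (2 * k)) := by ring
      _ ≤ q * q ^ (2 * k + 1) * (q ^ (2 * k) - 1) :=
          mul_le_mul_of_nonneg_left h1 (by positivity)
      _ = _ := by ring
  · rw [hqB]
    exact le_of_eq (by ring)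
  · rw [sq]
    have h3 := congrArg (Nat.cast (R := ℝ)) hn
    push_cast at h3 ⊢
    exact h3
  · have h1 : 1 ≤ Fintype.card F ^ (2 * k) := Nat.one_le_pow _ _ Fintype.card_pos
    have h3 := congrArg (Nat.cast (R := ℝ)) hm
    push_cast [Nat.cast_sub h1] at h3
    push_cast
    exact h3

end Averaging

/-- Let `q` be an odd prime power, let `d ≥ 7` be odd, and let `r` be
a nonzero square in `F_q`. If `𝓔 ⊆ F_q^d` has size at least `313·q^(d/2)`, then `𝓔`
contains a pair of `4`-paths with dilation ratio `r`. -/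
theorem paths_high_odd_dim {F : Type*} [Field F] [Fintype F]
    (hodd : Odd (Fintype.card F))
    {d : ℕ} (hd7 : 7 ≤ d) (hdodd : Odd d)
    {r : F} (hr : r ≠ 0) (hrsq : IsSquare r)
    (𝓔 : Finset (Fin d → F))
    (hcard : 313 * (Fintype.card F : ℝ) ^ ((d : ℝ) / 2) ≤ (𝓔.card : ℝ)) :
    ContainsPairOfPaths 𝓔 4 r := by
  classical
  have hF : ringChar F ≠ 2 := by
    intro h
    exact (Nat.not_even_iff_odd.2 hodd) (Nat.even_iff.2 (FiniteField.even_card_of_char_two h))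
  have hq : 3 ≤ Fintype.card F := by
    have h1 := Fintype.one_lt_card (α := F)
    obtain ⟨j, hj⟩ := hodd
    omega
  obtain ⟨k, rfl⟩ := hdodd
  obtain ⟨s, rfl⟩ := hrsq
  have hs : s ≠ 0 := fun h => hr (by simp [h])
  have hcard2 : 97969 * (Fintype.card F : ℝ) ^ (2 * k + 1) ≤ (𝓔.card : ℝ) ^ 2 := by
    have h1 := pow_le_pow_left₀ (by positivity) hcard 2
    rw [mul_pow, ← Real.rpow_natCast (_ ^ _) 2, ← Real.rpow_mul (by positivity)] at h1
    have h2 : ((2 * k + 1 : ℕ) : ℝ) / 2 * ((2 : ℕ) : ℝ) = ((2 * k + 1 : ℕ) : ℝ) := by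
      push_cast; ring
    rw [h2, Real.rpow_natCast] at h1
    norm_num at h1
    exact h1
  have hinj : Function.Injective fun x : Fin (2 * k + 1) → F => s⁻¹ • x :=
    fun x y h => smul_right_injective _ (inv_ne_zero hs) h
  obtain ⟨σ, x, hx, hxE, hxn⟩ := exists_iso_path hF hq (k := k) (by omega) 𝓔
    (𝓔.image fun x => s⁻¹ • x) (Finset.card_image_of_injective _ hinj) hcard2
  refine ⟨x, fun i => s • (σ • x i), hx, ?_, fun i => (hxE i).1, ?_, ?_⟩
  · intro i j hij
    exact hx (smul_left_cancel σ (smul_right_injective _ hs hij))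
  · intro i
    obtain ⟨y, hy, hy'⟩ := Finset.mem_image.1 (hxE i).2
    change s • (σ • x i) ∈ 𝓔
    rw [← hy']
    simpa [smul_smul, hs] using hy
  · intro i
    refine ⟨?_, mul_ne_zero hr ?_⟩
    · change norm2 (s • (σ • x i.succ) - s • (σ • x i.castSucc)) = _
      rw [← smul_sub, norm2_smul, isoGroup_norm2, sq]
    · rw [norm2_sub_comm]
      exact hxn i
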